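/- arXiv:2309.00370 — 2 statements merged into one kernel-verified Lean document; each statement's English description precedes it below -/
import Mathlib

section
/- Let S be a subordinator with Laplace exponent φ ∈ I_o(0,1), and define Θ(t,λ) = λ ∫_0^∞ e^{−λr} P(S_r ≥ t) dr for t ≥ 0, λ > 0. Then Θ(t,λ) ≃ min(1, φ(t^{−1})/λ) for all t, λ > 0, with equivalence constants depending only on φ. -/
open Real MeasureTheory Set Filter ENNReal

/-- `s_φ(λ) = sup_{t>0} φ(λt)/φ(t)`, valued in `[0,∞]`. -/
noncomputable def sPhi (φ : ℝ → ℝ) (l : ℝ) : ℝ≥0∞ :=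
  ⨆ t ∈ Set.Ioi (0:ℝ), ENNReal.ofReal (φ (l * t) / φ t)

/-- `φ ∈ I(a,b)`: `s_φ(λ) = O(λ^a)` as `λ → 0` and `s_φ(λ) = O(λ^b)` as `λ → ∞`. -/
def memI (φ : ℝ → ℝ) (a b : ℝ) : Prop :=
  (∃ C > (0:ℝ), ∃ δ > (0:ℝ), ∀ l : ℝ, 0 < l → l < δ →
    sPhi φ l ≤ ENNReal.ofReal (C * l ^ a)) ∧
  (∃ C > (0:ℝ), ∃ M : ℝ, ∀ l : ℝ, M < l →
    sPhi φ l ≤ ENNReal.ofReal (C * l ^ b))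

/-- `φ ∈ I_o(a,b)`: `s_φ(λ) = o(λ^a)` as `λ → 0` and `s_φ(λ) = o(λ^b)` as `λ → ∞`. -/
def memIo (φ : ℝ → ℝ) (a b : ℝ) : Prop :=
  (∀ ε > (0:ℝ), ∃ δ > (0:ℝ), ∀ l : ℝ, 0 < l → l < δ →
    sPhi φ l ≤ ENNReal.ofReal (ε * l ^ a)) ∧
  (∀ ε > (0:ℝ), ∃ M : ℝ, ∀ l : ℝ, M < l →
    sPhi φ l ≤ ENNReal.ofReal (ε * l ^ b))

/-- `Θ(t,λ) = λ ∫_0^∞ e^{−λr} P(S_r ≥ t) dr`. -/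
noncomputable def Theta {Ω : Type*} [MeasurableSpace Ω] (P : Measure Ω)
    (S : ℝ → Ω → ℝ) (t l : ℝ) : ℝ :=
  l * ∫ r in Set.Ioi (0:ℝ), Real.exp (-(l * r)) * (P {ω | t ≤ S r ω}).toReal

lemma exp_bd {y : ℝ} (h0 : 0 ≤ y) (h1 : y ≤ 1) : y ≤ 2 * (1 - Real.exp (-y)) := by
  have h := Real.add_one_le_exp y
  have h2 : Real.exp (-y) * Real.exp y = 1 := by rw [← Real.exp_add]; simp
  have h3 := Real.exp_pos (-y)
  have h4 : Real.exp (-y) * (y + 1) ≤ 1 :=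
    (mul_le_mul_of_nonneg_left h h3.le).trans h2.le
  nlinarith [mul_nonneg h0 (sub_nonneg.2 h1)]

lemma exp_bd1 {y : ℝ} (h1 : 1 ≤ y) : 1 ≤ 2 * (1 - Real.exp (-y)) := by
  have := exp_bd zero_le_one le_rfl
  have h2 : Real.exp (-y) ≤ Real.exp (-1) := Real.exp_le_exp.2 (by linarith)
  linarith

lemma expo_int {l : ℝ} (hl : 0 < l) :
    IntegrableOn (fun r : ℝ => Real.exp (-(l * r))) (Set.Ioi 0) := by
  have := integrableOn_exp_mul_Ioi (neg_lt_zero.2 hl) 0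
  simpa [neg_mul] using this

lemma expo_val {l : ℝ} (hl : 0 < l) :
    ∫ r in Set.Ioi (0:ℝ), Real.exp (-(l * r)) = 1 / l := by
  have := integral_exp_mul_Ioi (neg_lt_zero.2 hl) 0
  simpa [neg_mul] using this

lemma J_eq (l a r : ℝ) : Real.exp (-(l * r)) * (1 - Real.exp (-(r * a)))
    = Real.exp (-(l * r)) - Real.exp (-((l + a) * r)) := by
  rw [mul_sub, ← Real.exp_add]; ring_nf

lemma J_int {l a : ℝ} (hl : 0 < l) (ha : 0 < a) :
    IntegrableOn (fun r : ℝ => Real.exp (-(l * r)) * (1 - Real.exp (-(r * a)))) (Set.Ioi 0) := by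
  simp only [J_eq]
  exact (expo_int hl).sub (expo_int (by linarith))

lemma J_val {l a : ℝ} (hl : 0 < l) (ha : 0 < a) :
    l * ∫ r in Set.Ioi (0:ℝ), Real.exp (-(l * r)) * (1 - Real.exp (-(r * a))) = a / (l + a) := by
  simp only [J_eq]
  have hla : 0 < l + a := by linarith
  rw [integral_sub (expo_int hl) (expo_int hla), expo_val hl, expo_val hla]
  field_simp
  ring

/-- for a subordinator `S` with Laplace exponent `φ ∈ I_o(0,1)`,
`Θ(t,λ) ≃ min(1, φ(t⁻¹)/λ)` for all `t, λ > 0`, with constants depending only on `φ`. -/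
theorem theta_equiv_min
    {Ω : Type*} [MeasurableSpace Ω] (P : Measure Ω) [IsProbabilityMeasure P]
    (S : ℝ → Ω → ℝ) (hmeas : Measurable (fun p : ℝ × Ω => S p.1 p.2))
    (φ : ℝ → ℝ) (hφpos : ∀ l ∈ Set.Ioi (0:ℝ), 0 < φ l) (hφ : memIo φ 0 1)
    (hzero : ∀ᵐ ω ∂P, S 0 ω = 0)
    (hnonneg : ∀ᵐ ω ∂P, ∀ t ≥ (0:ℝ), 0 ≤ S t ω)
    (hmono : ∀ᵐ ω ∂P, MonotoneOn (fun t => S t ω) (Set.Ici 0))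
    (hstat : ∀ q p : ℝ, 0 ≤ q → q ≤ p →
      Measure.map (fun ω => S p ω - S q ω) P = Measure.map (S (p - q)) P)
    (hlaplace : ∀ t ≥ (0:ℝ), ∀ l > (0:ℝ),
      (∫ ω, Real.exp (-(l * S t ω)) ∂P) = Real.exp (-(t * φ l))) :
    ∃ C > (0:ℝ), ∀ t > (0:ℝ), ∀ l > (0:ℝ),
      C⁻¹ * min 1 (φ t⁻¹ / l) ≤ Theta P S t l ∧
      Theta P S t l ≤ C * min 1 (φ t⁻¹ / l) := by
  have hmr : ∀ r, Measurable (S r) := fun r => hmeas.comp measurable_prodMk_left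
  have hnn : ∀ r ≥ (0:ℝ), ∀ᵐ ω ∂P, 0 ≤ S r ω := fun r hr => hnonneg.mono fun ω h => h r hr
  have hei : ∀ r ≥ (0:ℝ), ∀ x > (0:ℝ), Integrable (fun ω => Real.exp (-(x * S r ω))) P := by
    intro r hr x hx
    refine Integrable.of_bound (C := 1) (by have := hmr r; fun_prop) ?_
    filter_upwards [hnn r hr] with ω h
    rw [Real.norm_eq_abs, abs_of_pos (Real.exp_pos _)]
    exact Real.exp_le_one_iff.2 (by nlinarith [mul_nonneg hx.le h])
  have hL : ∀ r ≥ (0:ℝ), ∀ x > (0:ℝ),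
      ∫ ω, (1 - Real.exp (-(x * S r ω))) ∂P = 1 - Real.exp (-(r * φ x)) := by
    intro r hr x hx
    rw [integral_sub (integrable_const _) (hei r hr x hx), hlaplace r hr x hx]
    simp
  have hLi : ∀ r ≥ (0:ℝ), ∀ x > (0:ℝ), Integrable (fun ω => 1 - Real.exp (-(x * S r ω))) P :=
    fun r hr x hx => (integrable_const _).sub (hei r hr x hx)
  have hφmono : ∀ x > (0:ℝ), ∀ y ≥ x, φ x ≤ φ y := by
    intro x hx y hy
    have h1 : ∫ ω, Real.exp (-(y * S 1 ω)) ∂P ≤ ∫ ω, Real.exp (-(x * S 1 ω)) ∂P := by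
      refine integral_mono_ae (hei 1 zero_le_one y (by linarith)) (hei 1 zero_le_one x hx) ?_
      filter_upwards [hnn 1 zero_le_one] with ω h
      exact Real.exp_le_exp.2 (by nlinarith)
    rw [hlaplace 1 zero_le_one y (by linarith), hlaplace 1 zero_le_one x hx, Real.exp_le_exp] at h1
    linarith
  have hms : ∀ t r, MeasurableSet {ω | t ≤ S r ω} := fun t r =>
    measurableSet_le measurable_const (hmr r)
  have hind : ∀ t r, ∫ ω, ({ω | t ≤ S r ω}.indicator (fun _ => (1:ℝ)) ω) ∂P
      = (P {ω | t ≤ S r ω}).toReal := by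
    intro t r
    rw [integral_indicator (hms t r)]
    simp [Measure.real]
  have hindi : ∀ t r, Integrable ({ω | t ≤ S r ω}.indicator (fun _ => (1:ℝ))) P :=
    fun t r => (integrable_const _).indicator (hms t r)
  -- pointwise upper bound
  have hup : ∀ t > (0:ℝ), ∀ r ≥ (0:ℝ),
      (P {ω | t ≤ S r ω}).toReal ≤ 2 * (1 - Real.exp (-(r * φ t⁻¹))) := by
    intro t ht r hr
    have ht' : 0 < t⁻¹ := inv_pos.2 ht
    rw [← hind, ← hL r hr _ ht', ← integral_const_mul]
    refine integral_mono_ae (hindi t r) ((hLi r hr _ ht').const_mul 2) ?_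
    filter_upwards [hnn r hr] with ω h
    by_cases hω : t ≤ S r ω
    · rw [Set.indicator_of_mem (by exact hω)]
      refine exp_bd1 ?_
      rw [← div_eq_inv_mul, le_div_iff₀ ht]; linarith
    · rw [Set.indicator_of_notMem (by exact hω)]
      have : Real.exp (-(t⁻¹ * S r ω)) ≤ 1 :=
        Real.exp_le_one_iff.2 (by nlinarith [mul_nonneg ht'.le h])
      linarith
  -- pointwise lower bound
  have hlow : ∀ ε > (0:ℝ), ∀ t > (0:ℝ), ∀ r ≥ (0:ℝ),
      (1 - Real.exp (-(r * φ (ε * t⁻¹)))) - 2 * ε * (1 - Real.exp (-(r * φ t⁻¹)))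
        ≤ (P {ω | t ≤ S r ω}).toReal := by
    intro ε hε t ht r hr
    have ht' : 0 < t⁻¹ := inv_pos.2 ht
    have hεt : 0 < ε * t⁻¹ := mul_pos hε ht'
    rw [← hind, ← hL r hr _ ht', ← hL r hr _ hεt, ← integral_const_mul,
      ← integral_sub (hLi r hr _ hεt) ((hLi r hr _ ht').const_mul _)]
    refine integral_mono_ae ((hLi r hr _ hεt).sub ((hLi r hr _ ht').const_mul _)) (hindi t r) ?_
    filter_upwards [hnn r hr] with ω h
    have hy : 0 ≤ t⁻¹ * S r ω := mul_nonneg ht'.le h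
    by_cases hω : t ≤ S r ω
    · rw [Set.indicator_of_mem (by exact hω)]
      have h1 : Real.exp (-(t⁻¹ * S r ω)) ≤ 1 := Real.exp_le_one_iff.2 (by linarith)
      have h2 := Real.exp_pos (-(ε * t⁻¹ * S r ω))
      have h3 := mul_nonneg hε.le (sub_nonneg.2 h1)
      linarith
    · rw [Set.indicator_of_notMem (by exact hω)]
      have hy1 : t⁻¹ * S r ω ≤ 1 := by
        rw [← div_eq_inv_mul, div_le_iff₀ ht]; linarith [not_le.1 hω]
      have h1 := mul_le_mul_of_nonneg_left (exp_bd hy hy1) hε.le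
      have h2 := Real.add_one_le_exp (-(ε * t⁻¹ * S r ω))
      have h3 : ε * t⁻¹ * S r ω = ε * (t⁻¹ * S r ω) := by ring
      linarith
  have hTi : ∀ t, ∀ l > (0:ℝ), IntegrableOn
      (fun r : ℝ => Real.exp (-(l * r)) * (P {ω | t ≤ S r ω}).toReal) (Set.Ioi 0) := by
    intro t l hl
    have hm : Measurable (fun r : ℝ => (P {ω | t ≤ S r ω}).toReal) :=
      (measurable_measure_prodMk_left (ν := P)
        (measurableSet_le measurable_const hmeas : MeasurableSet {p : ℝ × Ω | t ≤ S p.1 p.2})).ennreal_toReal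
    refine Integrable.mono' (expo_int hl) (by fun_prop) (ae_of_all _ fun r => ?_)
    rw [Real.norm_eq_abs, abs_of_nonneg (by positivity)]
    have : (P {ω | t ≤ S r ω}).toReal ≤ 1 := measureReal_le_one
    exact mul_le_of_le_one_right (Real.exp_pos _).le this
  -- choose ε
  obtain ⟨M, hM⟩ := hφ.2 (1/4) (by norm_num)
  obtain ⟨N, hN1, hNM⟩ : ∃ N : ℝ, 1 ≤ N ∧ M < N :=
    ⟨max 1 (M + 1), le_max_left _ _, lt_of_lt_of_le (by linarith) (le_max_right _ _)⟩
  have hN0 : 0 < N := by linarith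
  have hMN := hM N hNM
  have hNφ : ∀ x > (0:ℝ), φ (N * x) ≤ 1 / 4 * N * φ x := by
    intro x hx
    have h1 : ENNReal.ofReal (φ (N * x) / φ x) ≤ sPhi φ N :=
      le_iSup₂_of_le (f := fun t (_ : t ∈ Set.Ioi (0:ℝ)) => ENNReal.ofReal (φ (N * t) / φ t))
        x hx le_rfl
    have h2 := h1.trans hMN
    rw [Real.rpow_one, ENNReal.ofReal_le_ofReal_iff (by positivity)] at h2
    exact (div_le_iff₀ (hφpos x hx)).1 h2
  refine ⟨2 + N, by positivity, fun t ht l hl => ?_⟩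
  have ht' : 0 < t⁻¹ := inv_pos.2 ht
  have ha := hφpos t⁻¹ ht'
  have hεt : 0 < N⁻¹ * t⁻¹ := by positivity
  have hb := hφpos _ hεt
  have hba : φ (N⁻¹ * t⁻¹) ≤ φ t⁻¹ :=
    hφmono _ hεt _ (mul_le_of_le_one_left ht'.le (inv_le_one_of_one_le₀ hN1))
  have hab : φ t⁻¹ ≤ 1 / 4 * N * φ (N⁻¹ * t⁻¹) := by
    have := hNφ _ hεt
    rwa [mul_inv_cancel_left₀ hN0.ne'] at this
  have hU : Theta P S t l ≤ 2 * (φ t⁻¹ / (l + φ t⁻¹)) := by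
    rw [← J_val hl ha, Theta, mul_left_comm 2 l, ← integral_const_mul 2]
    refine mul_le_mul_of_nonneg_left ?_ hl.le
    refine setIntegral_mono_on (hTi t l hl) ((J_int hl ha).const_mul 2) measurableSet_Ioi
      fun r hr => ?_
    have := mul_le_mul_of_nonneg_left (hup t ht r (le_of_lt hr)) (Real.exp_pos (-(l * r))).le
    linarith
  have hLo : φ (N⁻¹ * t⁻¹) / (l + φ (N⁻¹ * t⁻¹)) - 2 * N⁻¹ * (φ t⁻¹ / (l + φ t⁻¹))
      ≤ Theta P S t l := by
    rw [← J_val hl ha, ← J_val hl hb, Theta, mul_left_comm (2 * N⁻¹) l,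
      ← integral_const_mul (2 * N⁻¹),
      ← mul_sub, ← integral_sub (J_int hl hb) ((J_int hl ha).const_mul _)]
    refine mul_le_mul_of_nonneg_left ?_ hl.le
    refine setIntegral_mono_on ((J_int hl hb).sub ((J_int hl ha).const_mul _)) (hTi t l hl)
      measurableSet_Ioi fun r hr => ?_
    have := mul_le_mul_of_nonneg_left (hlow N⁻¹ (by positivity) t ht r (le_of_lt hr))
      (Real.exp_pos (-(l * r))).le
    linarith
  generalize φ (N⁻¹ * t⁻¹) = b at *
  generalize φ t⁻¹ = a at *
  have hla : 0 < l + a := by linarith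
  have hm0 : 0 ≤ min 1 (a / l) := by positivity
  constructor
  · have h1 : 4 * N⁻¹ * (a / (l + a)) ≤ b / (l + b) := by
      calc 4 * N⁻¹ * (a / (l + a)) = (4 * N⁻¹ * a) / (l + a) := by ring
        _ ≤ b / (l + a) := by
          gcongr
          have : 4 * N⁻¹ * a ≤ 4 * N⁻¹ * (1 / 4 * N * b) := by gcongr
          have h4 : 4 * N⁻¹ * (1 / 4 * N * b) = b := by field_simp
          linarith
        _ ≤ b / (l + b) := by gcongr
    have h2 : min 1 (a / l) ≤ 2 * (a / (l + a)) := by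
      rcases le_total l a with h | h
      · refine (min_le_left _ _).trans ?_
        rw [← mul_div_assoc, le_div_iff₀ hla]; linarith
      · refine (min_le_right _ _).trans ?_
        rw [← mul_div_assoc, div_le_div_iff₀ hl hla]; nlinarith
    have h3 : (2 + N)⁻¹ ≤ N⁻¹ := by gcongr; linarith
    have h4 : (2 + N)⁻¹ * min 1 (a / l) ≤ N⁻¹ * (2 * (a / (l + a))) := by gcongr
    linarith
  · have h2 : a / (l + a) ≤ min 1 (a / l) := by
      refine le_min ?_ ?_
      · rw [div_le_one hla]; linarith
      · gcongr; linarith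
    nlinarith
end

section
/- (Equivalence theorem for generalized real interpolation) Let (A₀,A₁) be an interpolation couple, φ ∈ I_o(0,1), p ∈ [1,∞]. Then the K-method space (A₀,A₁)^K_{φ,p} and the J-method space (A₀,A₁)^J_{φ,p} coincide as sets, with equivalent norms. -/
open Real MeasureTheory Set Filter ENNReal

section InterpolationCouple

variable {E A₀ A₁ : Type*} [AddCommGroup E]
  [NormedAddCommGroup A₀] [NormedAddCommGroup A₁]

/-- The `K`-functional of the couple `(A₀, A₁)` realized inside an ambient abelian
group `E` via additive embeddings `j₀, j₁`:
`K(t,a) = inf{‖a₀‖ + t‖a₁‖ : a = j₀ a₀ + j₁ a₁}` (equal to `∞` if `a ∉ A₀ + A₁`). -/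
noncomputable def Kfun (j₀ : A₀ →+ E) (j₁ : A₁ →+ E) (t : ℝ) (a : E) : ℝ≥0∞ :=
  ⨅ (q : A₀ × A₁) (_ : j₀ q.1 + j₁ q.2 = a), ENNReal.ofReal (‖q.1‖ + t * ‖q.2‖)

/-- The generalized `K`-method interpolation norm
`‖a‖_{(A₀,A₁)^K_{φ,p}} = ( ∫_0^∞ (φ(t⁻¹) K(t,a))^p dt/t )^{1/p}` (sup for `p = ∞`). -/
noncomputable def interpNormK (φ : ℝ → ℝ) (p : ℝ≥0∞)
    (j₀ : A₀ →+ E) (j₁ : A₁ →+ E) (a : E) : ℝ≥0∞ :=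
  if p = ∞ then ⨆ t ∈ Set.Ioi (0:ℝ), ENNReal.ofReal (φ t⁻¹) * Kfun j₀ j₁ t a
  else (∫⁻ t in Set.Ioi (0:ℝ),
      (ENNReal.ofReal (φ t⁻¹) * Kfun j₀ j₁ t a) ^ p.toReal / ENNReal.ofReal t) ^ p.toReal⁻¹

end InterpolationCouple

section Jmethod

variable {E A₀ A₁ : Type*} [AddCommGroup E]
  [NormedAddCommGroup A₀] [NormedAddCommGroup A₁]

/-- The `J`-functional: for `a ∈ A₀ ∩ A₁` (given by a compatible pair),
`J(t,a) = max(‖a‖_{A₀}, t‖a‖_{A₁})`. -/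
noncomputable def Jfun (t : ℝ) (x : A₀ × A₁) : ℝ := max ‖x.1‖ (t * ‖x.2‖)

/-- The generalized `J`-method interpolation norm, in its (equivalent) discrete form:
the infimum over all representations `a = ∑_{j∈ℤ} u_j` (with `u_j ∈ A₀ ∩ A₁`, the sum
converging in `A₀ + A₁`, i.e. w.r.t. `K(1,·)`) of the `ℓ_p`-norm of
`j ↦ φ(2^{−j}) J(2^j, u_j)`. -/
noncomputable def interpNormJ (φ : ℝ → ℝ) (p : ℝ≥0∞)
    (j₀ : A₀ →+ E) (j₁ : A₁ →+ E) (a : E) : ℝ≥0∞ :=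
  ⨅ (u : ℤ → A₀ × A₁) (_ : ∀ j, j₀ (u j).1 = j₁ (u j).2)
    (_ : Filter.Tendsto
      (fun N : ℕ => Kfun j₀ j₁ 1 (a - ∑ j ∈ Finset.Icc (-(N:ℤ)) (N:ℤ), j₀ (u j).1))
      Filter.atTop (nhds 0)),
    if p = ∞ then
      ⨆ j : ℤ, ENNReal.ofReal (φ ((2:ℝ) ^ (-j)) * Jfun ((2:ℝ) ^ j) (u j))
    else
      (∑' j : ℤ,
        ENNReal.ofReal (φ ((2:ℝ) ^ (-j)) * Jfun ((2:ℝ) ^ j) (u j)) ^ p.toReal) ^ p.toReal⁻¹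

end Jmethod

/-- The `ℓ_p(ℤ)` functional on `[0,∞]`-valued sequences. -/
noncomputable def lpS (p : ℝ≥0∞) (x : ℤ → ℝ≥0∞) : ℝ≥0∞ :=
  if p = ∞ then ⨆ j : ℤ, x j else (∑' j : ℤ, x j ^ p.toReal) ^ p.toReal⁻¹

lemma lpS_mono (p : ℝ≥0∞) {x y : ℤ → ℝ≥0∞} (h : ∀ j, x j ≤ y j) : lpS p x ≤ lpS p y := by
  unfold lpS
  split_ifs with hp
  · exact iSup_mono h
  · gcongr with j
    exact h j

lemma one_le_toReal_of {p : ℝ≥0∞} (hp : 1 ≤ p) (hpt : p ≠ ∞) : 1 ≤ p.toReal := by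
  simpa using ENNReal.toReal_mono hpt hp

lemma lpS_const_mul {p : ℝ≥0∞} (hp : 1 ≤ p) (c : ℝ≥0∞) (x : ℤ → ℝ≥0∞) :
    lpS p (fun j => c * x j) = c * lpS p x := by
  unfold lpS
  split_ifs with hpt
  · rw [ENNReal.mul_iSup]
  · have h1 := one_le_toReal_of hp hpt
    have h0 : 0 < p.toReal := by linarith
    simp_rw [ENNReal.mul_rpow_of_nonneg _ _ h0.le]
    rw [ENNReal.tsum_mul_left, ENNReal.mul_rpow_of_nonneg _ _ (inv_nonneg.2 h0.le),
      ENNReal.rpow_rpow_inv h0.ne']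

lemma lpS_shift (p : ℝ≥0∞) (k : ℤ) (x : ℤ → ℝ≥0∞) :
    lpS p (fun j => x (j + k)) = lpS p x := by
  unfold lpS
  split_ifs with hpt
  · exact (Equiv.addRight k).iSup_comp (g := x)
  · congr 1
    exact (Equiv.addRight k).tsum_eq (fun j => x j ^ p.toReal)

lemma le_lpS {p : ℝ≥0∞} (hp : 1 ≤ p) (x : ℤ → ℝ≥0∞) (j : ℤ) : x j ≤ lpS p x := by
  unfold lpS
  split_ifs with hpt
  · exact le_iSup x j
  · have h1 := one_le_toReal_of hp hpt
    have h0 : 0 < p.toReal := by linarith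
    calc x j = (x j ^ p.toReal) ^ p.toReal⁻¹ := (ENNReal.rpow_rpow_inv h0.ne' _).symm
      _ ≤ _ := by
        gcongr
        exact ENNReal.le_tsum j

lemma lpS_add_le {p : ℝ≥0∞} (hp : 1 ≤ p) (x y : ℤ → ℝ≥0∞) :
    lpS p (fun j => x j + y j) ≤ lpS p x + lpS p y := by
  by_cases hpt : p = ∞
  · simp only [lpS, hpt, if_true]
    exact iSup_le fun j => add_le_add (le_iSup x j) (le_iSup y j)
  · simp only [lpS, hpt, if_false]
    have h1 := one_le_toReal_of hp hpt
    have := ENNReal.lintegral_Lp_add_le (μ := (Measure.count : Measure ℤ)) (f := x) (g := y)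
      (measurable_of_countable _).aemeasurable (measurable_of_countable _).aemeasurable h1
    simpa [lintegral_count] using this

lemma exists_lpS_small {p : ℝ≥0∞} (hp : 1 ≤ p) (η : ℝ≥0∞) (hη : η ≠ 0) :
    ∃ e : ℤ → ℝ≥0∞, (∀ i, e i ≠ 0) ∧ lpS p e ≤ η := by
  by_cases hpt : p = ∞
  · exact ⟨fun _ => η, fun _ => hη, by simp [lpS, hpt]⟩
  · have h1 := one_le_toReal_of hp hpt
    have h0 : 0 < p.toReal := by linarith
    obtain ⟨e, he, hs⟩ := ENNReal.exists_pos_sum_of_countable (ε := η ^ p.toReal)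
      (by simp [hη, h0.le]) ℤ
    refine ⟨fun i => (e i : ℝ≥0∞) ^ p.toReal⁻¹, fun i => ?_, ?_⟩
    · have := he i
      simp [this.ne']
    · simp only [lpS, hpt, if_false, ENNReal.rpow_inv_rpow h0.ne']
      calc _ ≤ (η ^ p.toReal) ^ p.toReal⁻¹ := by gcongr
        _ = η := ENNReal.rpow_rpow_inv h0.ne' _

lemma tsum_weight_le {r : ℝ} (hr : 1 ≤ r) (c x : ℤ → ℝ≥0∞) :
    (∑' k, c k * x k) ^ r ≤ (∑' k, c k) ^ (r - 1) * ∑' k, c k * x k ^ r := by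
  have h0 : 0 < r := by linarith
  have key : ∑' k, c k * x k ≤ (∑' k, c k) ^ (1 - r⁻¹) * (∑' k, c k * x k ^ r) ^ r⁻¹ := by
    rw [ENNReal.tsum_eq_iSup_sum]
    refine iSup_le fun s => ?_
    refine (ENNReal.inner_le_weight_mul_Lp_of_nonneg s hr c x).trans ?_
    have : 0 ≤ 1 - r⁻¹ := by
      have := inv_le_one_of_one_le₀ hr
      linarith
    gcongr
    · exact ENNReal.sum_le_tsum s
    · exact ENNReal.sum_le_tsum s
  calc _ ≤ ((∑' k, c k) ^ (1 - r⁻¹) * (∑' k, c k * x k ^ r) ^ r⁻¹) ^ r := by gcongr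
    _ = _ := by
      rw [ENNReal.mul_rpow_of_nonneg _ _ h0.le, ENNReal.rpow_inv_rpow h0.ne', ← ENNReal.rpow_mul]
      congr 2
      field_simp

lemma lpS_young {p : ℝ≥0∞} (hp : 1 ≤ p) (c x : ℤ → ℝ≥0∞) :
    lpS p (fun i => ∑' k, c k * x (i + k)) ≤ (∑' k, c k) * lpS p x := by
  by_cases hpt : p = ∞
  · simp only [lpS, hpt, if_true]
    refine iSup_le fun i => ?_
    rw [← ENNReal.tsum_mul_right]
    gcongr
    exact le_iSup x _
  · have h1 := one_le_toReal_of hp hpt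
    have h0 : 0 < p.toReal := by linarith
    simp only [lpS, hpt, if_false]
    set r := p.toReal
    have hx : ∀ k : ℤ, ∑' i, x (i + k) ^ r = ∑' i, x i ^ r := fun k =>
      (Equiv.addRight k).tsum_eq (fun j => x j ^ r)
    calc (∑' i, (∑' k, c k * x (i + k)) ^ r) ^ r⁻¹
        ≤ (∑' i, (∑' k, c k) ^ (r - 1) * ∑' k, c k * x (i + k) ^ r) ^ r⁻¹ := by
          gcongr with i
          exact tsum_weight_le h1 c _
      _ = ((∑' k, c k) ^ r * ∑' i, x i ^ r) ^ r⁻¹ := by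
          rw [ENNReal.tsum_mul_left, ENNReal.tsum_comm]
          simp_rw [ENNReal.tsum_mul_left, hx]
          rw [ENNReal.tsum_mul_right, ← mul_assoc]
          congr 2
          nth_rw 2 [← ENNReal.rpow_one (∑' k, c k)]
          rw [← ENNReal.rpow_add_of_nonneg _ _ (by linarith) zero_le_one]
          congr 1
          ring
      _ = _ := by
          rw [ENNReal.mul_rpow_of_nonneg _ _ (inv_nonneg.2 h0.le), ENNReal.rpow_rpow_inv h0.ne']


lemma ofReal_phi_le (φ : ℝ → ℝ) (hφpos : ∀ t ∈ Set.Ioi (0:ℝ), 0 < φ t) (l t : ℝ) (ht : 0 < t) :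
    ENNReal.ofReal (φ (l * t)) ≤ sPhi φ l * ENNReal.ofReal (φ t) := by
  have h1 : ENNReal.ofReal (φ (l * t) / φ t) ≤ sPhi φ l :=
    le_iSup₂ (f := fun t (_ : t ∈ Set.Ioi (0:ℝ)) => ENNReal.ofReal (φ (l * t) / φ t)) t ht
  have h := hφpos t ht
  calc ENNReal.ofReal (φ (l * t)) = ENNReal.ofReal (φ (l * t) / φ t) * ENNReal.ofReal (φ t) := by
        rw [← ENNReal.ofReal_mul' h.le, div_mul_cancel₀ _ h.ne']
    _ ≤ _ := by gcongr

lemma sPhi_mul_le (φ : ℝ → ℝ) (hφpos : ∀ t ∈ Set.Ioi (0:ℝ), 0 < φ t) (l m : ℝ) (hm : 0 < m) :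
    sPhi φ (l * m) ≤ sPhi φ l * sPhi φ m := by
  refine iSup₂_le fun t ht => ?_
  have h := hφpos t ht
  rw [ENNReal.ofReal_div_of_pos h]
  refine ENNReal.div_le_of_le_mul ?_
  rw [mul_assoc l m t, mul_assoc (sPhi φ l)]
  refine (ofReal_phi_le φ hφpos l (m * t) (mul_pos hm ht)).trans ?_
  gcongr
  exact ofReal_phi_le φ hφpos m t ht

lemma exists_local_bound (φ : ℝ → ℝ) (hφpos : ∀ t ∈ Set.Ioi (0:ℝ), 0 < φ t)
    (hφ : memIo φ 0 1) :
    ∃ S : ℝ≥0∞, S ≠ ∞ ∧ 1 ≤ S ∧ ∀ l : ℝ, 0 < l → l ≤ 2 → sPhi φ l ≤ S := by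
  obtain ⟨δ, hδ, h0⟩ := hφ.1 1 one_pos
  obtain ⟨M, hM⟩ := hφ.2 1 one_pos
  set L := max (M + 1) (2 / δ + 1) with hL
  have hL1 : M < L := lt_of_lt_of_le (by linarith) (le_max_left _ _)
  have hL2 : 2 / δ < L := lt_of_lt_of_le (by linarith) (le_max_right _ _)
  have hLpos : 0 < L := lt_trans (by positivity) hL2
  refine ⟨max 1 (ENNReal.ofReal 1 * ENNReal.ofReal L), by simp, le_max_left _ _, fun l hl hl2 => ?_⟩
  refine le_trans ?_ (le_max_right _ _)
  have : l = l / L * L := by field_simp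
  rw [this]
  refine (sPhi_mul_le φ hφpos _ _ hLpos).trans ?_
  have a := h0 (l / L) (by positivity) (by
    rw [div_lt_iff₀ hLpos]
    rw [div_lt_iff₀ hδ] at hL2
    linarith)
  have b := hM L hL1
  simp only [one_mul, Real.rpow_zero, Real.rpow_one] at a b
  gcongr

lemma tsum_ne_top_of_halving (a : ℕ → ℝ≥0∞) (n : ℕ) (hfin : ∀ m, a m ≠ ∞)
    (h : ∀ m, a (m + n) ≤ a m / 2) : ∑' m, a m ≠ ∞ := by
  set A := ∑ m ∈ Finset.range n, a m with hA
  have hAt : A ≠ ∞ := ENNReal.sum_ne_top.2 fun i _ => hfin i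
  have key : ∑' m, a m ≤ 2 * A := by
    rw [ENNReal.tsum_eq_iSup_nat]
    refine iSup_le fun N => ?_
    set P := ∑ m ∈ Finset.range N, a m with hP
    have hPt : P ≠ ∞ := ENNReal.sum_ne_top.2 fun i _ => hfin i
    have : P ≤ A + P / 2 := by
      calc P ≤ ∑ m ∈ Finset.range (n + N), a m :=
            Finset.sum_le_sum_of_subset (Finset.range_mono (by omega))
        _ = A + ∑ m ∈ Finset.range N, a (n + m) := Finset.sum_range_add _ _ _
        _ ≤ A + ∑ m ∈ Finset.range N, a m / 2 := by
            gcongr with m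
            rw [add_comm]
            exact h m
        _ = A + P / 2 := by
            simp only [div_eq_mul_inv, ← Finset.sum_mul, hP]
    have h2 : P / 2 + P / 2 ≤ A + P / 2 := by rwa [ENNReal.add_halves]
    have h3 : P / 2 ≤ A := (ENNReal.add_le_add_iff_right
      (ENNReal.div_ne_top hPt (by norm_num))).1 h2
    calc P = P / 2 + P / 2 := (ENNReal.add_halves _).symm
      _ ≤ A + A := by gcongr
      _ = 2 * A := (two_mul _).symm
  exact ne_top_of_le_ne_top (ENNReal.mul_ne_top (by norm_num) hAt) key

/-- The convolution kernel. -/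
noncomputable def cKer (φ : ℝ → ℝ) (k : ℤ) : ℝ≥0∞ :=
  sPhi φ ((2:ℝ) ^ k) * min 1 (ENNReal.ofReal ((2:ℝ) ^ (-k)))

lemma cKer_tsum (φ : ℝ → ℝ) (hφpos : ∀ t ∈ Set.Ioi (0:ℝ), 0 < φ t)
    (hφ : memIo φ 0 1) : ∑' k, cKer φ k ≠ ∞ := by
  obtain ⟨S, hS, hS1, hloc⟩ := exists_local_bound φ hφpos hφ
  have hpow : ∀ m : ℕ, sPhi φ ((2:ℝ) ^ m) ≠ ∞ := by
    intro m
    induction m with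
    | zero => exact ne_top_of_le_ne_top hS (hloc _ (by simp) (by simp))
    | succ m ih =>
      rw [pow_succ]
      exact ne_top_of_le_ne_top (ENNReal.mul_ne_top ih
        (ne_top_of_le_ne_top hS (hloc 2 (by norm_num) le_rfl))) (sPhi_mul_le φ hφpos _ _ (by norm_num))
  have hneg : ∀ m : ℕ, sPhi φ ((2:ℝ)⁻¹ ^ m) ≠ ∞ := fun m =>
    ne_top_of_le_ne_top hS (hloc _ (by positivity)
      ((pow_le_one₀ (by norm_num) (by norm_num)).trans (by norm_num)))
  have hsum1 : ∑' m : ℕ, sPhi φ ((2:ℝ)⁻¹ ^ m) ≠ ∞ := by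
    obtain ⟨δ, hδ, h0⟩ := hφ.1 2⁻¹ (by norm_num)
    obtain ⟨n, hn⟩ := exists_pow_lt_of_lt_one hδ (show (2:ℝ)⁻¹ < 1 by norm_num)
    refine tsum_ne_top_of_halving _ n hneg fun m => ?_
    rw [pow_add, div_eq_mul_inv]
    refine (sPhi_mul_le φ hφpos _ _ (by positivity)).trans ?_
    gcongr
    refine (h0 _ (by positivity) hn).trans (le_of_eq ?_)
    rw [Real.rpow_zero, mul_one, ENNReal.ofReal_inv_of_pos (by norm_num)]
    simp
  have hsum2 : ∑' m : ℕ, sPhi φ ((2:ℝ) ^ m) * ENNReal.ofReal ((2:ℝ)⁻¹ ^ m) ≠ ∞ := by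
    obtain ⟨M, hM⟩ := hφ.2 2⁻¹ (by norm_num)
    obtain ⟨n, hn⟩ := pow_unbounded_of_one_lt M (show (1:ℝ) < 2 by norm_num)
    refine tsum_ne_top_of_halving _ n (fun m => ENNReal.mul_ne_top (hpow m) (by simp)) fun m => ?_
    rw [pow_add, pow_add, ENNReal.ofReal_mul (by positivity), div_eq_mul_inv]
    calc _ ≤ sPhi φ ((2:ℝ) ^ m) * sPhi φ ((2:ℝ) ^ n) *
            (ENNReal.ofReal ((2:ℝ)⁻¹ ^ m) * ENNReal.ofReal ((2:ℝ)⁻¹ ^ n)) := by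
          gcongr
          exact sPhi_mul_le φ hφpos _ _ (by positivity)
      _ = sPhi φ ((2:ℝ) ^ m) * ENNReal.ofReal ((2:ℝ)⁻¹ ^ m) *
            (sPhi φ ((2:ℝ) ^ n) * ENNReal.ofReal ((2:ℝ)⁻¹ ^ n)) := by ring
      _ ≤ _ := by
          gcongr
          calc _ ≤ ENNReal.ofReal (2⁻¹ * (2 ^ n) ^ (1:ℝ)) * ENNReal.ofReal ((2:ℝ)⁻¹ ^ n) := by
                gcongr
                exact hM _ hn
            _ = _ := by
                rw [← ENNReal.ofReal_mul (by positivity), Real.rpow_one, mul_assoc, ← mul_pow]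
                norm_num
                rw [ENNReal.ofReal_div_of_pos (by norm_num)]
                simp
  rw [tsum_of_nat_of_neg_add_one ENNReal.summable ENNReal.summable]
  refine ENNReal.add_ne_top.2 ⟨ne_top_of_le_ne_top hsum2 (ENNReal.tsum_le_tsum fun m => ?_),
    ne_top_of_le_ne_top hsum1 ((ENNReal.tsum_le_tsum (fun m => ?_)).trans
      (ENNReal.tsum_comp_le_tsum_of_injective (add_left_injective 1)
        (fun m : ℕ => sPhi φ ((2:ℝ)⁻¹ ^ m))))⟩
  · unfold cKer
    rw [zpow_neg, zpow_natCast, inv_pow]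
    gcongr
    exact min_le_right _ _
  · unfold cKer
    have : (2:ℝ) ^ (-((m:ℤ) + 1)) = (2:ℝ)⁻¹ ^ (m + 1) := by
      rw [zpow_neg, inv_pow]; norm_cast
    rw [this]
    exact mul_le_of_le_one_right' (min_le_left _ _)

section Kprops

variable {E A₀ A₁ : Type*} [AddCommGroup E]
  [NormedAddCommGroup A₀] [NormedAddCommGroup A₁]

lemma Kfun_le (j₀ : A₀ →+ E) (j₁ : A₁ →+ E) (t : ℝ) (x : A₀) (y : A₁) :
    Kfun j₀ j₁ t (j₀ x + j₁ y) ≤ ENNReal.ofReal (‖x‖ + t * ‖y‖) :=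
  iInf₂_le (f := fun (q : A₀ × A₁) (_ : j₀ q.1 + j₁ q.2 = j₀ x + j₁ y) =>
    ENNReal.ofReal (‖q.1‖ + t * ‖q.2‖)) (x, y) rfl

lemma Kfun_add_le (j₀ : A₀ →+ E) (j₁ : A₁ →+ E) (t : ℝ) (ht : 0 ≤ t) (a b : E) :
    Kfun j₀ j₁ t (a + b) ≤ Kfun j₀ j₁ t a + Kfun j₀ j₁ t b := by
  conv_rhs => unfold Kfun
  simp only [ENNReal.iInf_add, ENNReal.add_iInf]
  refine le_iInf fun q => le_iInf fun hq => le_iInf fun r => le_iInf fun hr => ?_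
  have : a + b = j₀ (r.1 + q.1) + j₁ (r.2 + q.2) := by
    rw [← hq, ← hr, map_add, map_add]; abel
  rw [this]
  refine (Kfun_le j₀ j₁ t _ _).trans ?_
  rw [← ENNReal.ofReal_add (by positivity) (by positivity)]
  apply ENNReal.ofReal_le_ofReal
  have h1 := norm_add_le r.1 q.1
  have h2 := mul_le_mul_of_nonneg_left (norm_add_le r.2 q.2) ht
  linarith

lemma Kfun_zero (j₀ : A₀ →+ E) (j₁ : A₁ →+ E) (t : ℝ) : Kfun j₀ j₁ t 0 = 0 := by
  have := Kfun_le j₀ j₁ t 0 0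
  simpa using this

lemma Kfun_sum_le (j₀ : A₀ →+ E) (j₁ : A₁ →+ E) (t : ℝ) (ht : 0 ≤ t) (s : Finset ℤ) (f : ℤ → E) :
    Kfun j₀ j₁ t (∑ j ∈ s, f j) ≤ ∑ j ∈ s, Kfun j₀ j₁ t (f j) := by
  induction s using Finset.induction_on with
  | empty => simp [Kfun_zero]
  | insert i s hi ih =>
    rw [Finset.sum_insert hi, Finset.sum_insert hi]
    exact (Kfun_add_le j₀ j₁ t ht _ _).trans (by gcongr)

lemma Kfun_scale (j₀ : A₀ →+ E) (j₁ : A₁ →+ E) (s t c : ℝ) (hc : 1 ≤ c) (h : t ≤ c * s) (a : E) :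
    Kfun j₀ j₁ t a ≤ ENNReal.ofReal c * Kfun j₀ j₁ s a := by
  conv_rhs => unfold Kfun
  have hc0 : ENNReal.ofReal c ≠ 0 := by
    simp; linarith
  rw [ENNReal.mul_iInf_of_ne hc0 (by simp)]
  refine le_iInf fun q => ?_
  rw [ENNReal.mul_iInf_of_ne hc0 (by simp)]
  refine le_iInf fun hq => ?_
  rw [← hq, ← ENNReal.ofReal_mul (by linarith)]
  refine (Kfun_le j₀ j₁ t _ _).trans (ENNReal.ofReal_le_ofReal ?_)
  have h1 := mul_le_mul_of_nonneg_right h (norm_nonneg q.2)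
  have h2 := mul_le_mul_of_nonneg_right hc (norm_nonneg q.1)
  linarith

lemma Kfun_mono (j₀ : A₀ →+ E) (j₁ : A₁ →+ E) (s t : ℝ) (h : t ≤ s) (a : E) :
    Kfun j₀ j₁ t a ≤ Kfun j₀ j₁ s a := by
  simpa using Kfun_scale j₀ j₁ s t 1 le_rfl (by linarith) a

/-- The discretised `K` sequence. -/
noncomputable def kSeq (φ : ℝ → ℝ) (j₀ : A₀ →+ E) (j₁ : A₁ →+ E) (a : E) (i : ℤ) : ℝ≥0∞ :=
  ENNReal.ofReal (φ ((2:ℝ) ^ (-i))) * Kfun j₀ j₁ ((2:ℝ) ^ i) a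

lemma Ioi_eq_iUnion : Set.Ioi (0:ℝ) = ⋃ i : ℤ, Set.Ico ((2:ℝ) ^ i) ((2:ℝ) ^ (i + 1)) := by
  ext t
  simp only [Set.mem_iUnion]
  constructor
  · intro ht
    exact exists_mem_Ico_zpow ht (by norm_num)
  · rintro ⟨i, hi⟩
    exact lt_of_lt_of_le (by positivity) hi.1

lemma Ico_disj : Pairwise (Function.onFun Disjoint
    (fun i : ℤ => Set.Ico ((2:ℝ) ^ i) ((2:ℝ) ^ (i + 1)))) := by
  intro m n hmn
  refine Set.disjoint_left.2 fun t ht ht' => hmn ?_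
  have h1 : (2:ℝ) ^ m < 2 ^ (n + 1) := ht.1.trans_lt ht'.2
  have h2 : (2:ℝ) ^ n < 2 ^ (m + 1) := ht'.1.trans_lt ht.2
  have h1' := (zpow_lt_zpow_iff_right₀ (by norm_num : (1:ℝ) < 2)).1 h1
  have h2' := (zpow_lt_zpow_iff_right₀ (by norm_num : (1:ℝ) < 2)).1 h2
  omega

lemma two_zpow_succ (i : ℤ) : (2:ℝ) ^ (i + 1) = 2 * 2 ^ i := by
  rw [zpow_add₀ (by norm_num)]; simp [mul_comm]

lemma vol_Ico (i : ℤ) : volume (Set.Ico ((2:ℝ) ^ i) ((2:ℝ) ^ (i + 1))) =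
    ENNReal.ofReal ((2:ℝ) ^ i) := by
  rw [Real.volume_Ico, two_zpow_succ]; congr 1; ring

variable (φ : ℝ → ℝ) (j₀ : A₀ →+ E) (j₁ : A₁ →+ E)

lemma pt_upper (hφpos : ∀ t ∈ Set.Ioi (0:ℝ), 0 < φ t) (S : ℝ≥0∞)
    (hS : ∀ l : ℝ, 0 < l → l ≤ 2 → sPhi φ l ≤ S) (a : E) (i : ℤ) (t : ℝ)
    (ht : t ∈ Set.Ico ((2:ℝ) ^ i) ((2:ℝ) ^ (i + 1))) :
    ENNReal.ofReal (φ t⁻¹) * Kfun j₀ j₁ t a ≤ 2 * S * kSeq φ j₀ j₁ a i := by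
  have h2 : (0:ℝ) < 2 ^ i := by positivity
  have ht0 : 0 < t := h2.trans_le ht.1
  have h := ofReal_phi_le φ hφpos (2 ^ i / t) (2 ^ (-i)) (by positivity)
  have e : (2:ℝ) ^ i / t * 2 ^ (-i) = t⁻¹ := by rw [zpow_neg]; field_simp
  rw [e] at h
  have h3 := hS (2 ^ i / t) (by positivity) (by
    rw [div_le_iff₀ ht0]; linarith [ht.1])
  have h4 := Kfun_scale j₀ j₁ (2 ^ i) t 2 (by norm_num) (by
    rw [← two_zpow_succ]; exact ht.2.le) a
  unfold kSeq
  calc _ ≤ (S * ENNReal.ofReal (φ (2 ^ (-i)))) * (ENNReal.ofReal 2 * Kfun j₀ j₁ (2 ^ i) a) := by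
        gcongr
        exact h.trans (by gcongr)
    _ = _ := by
        rw [show ENNReal.ofReal 2 = 2 by simp]; ring

lemma pt_lower (hφpos : ∀ t ∈ Set.Ioi (0:ℝ), 0 < φ t) (S : ℝ≥0∞)
    (hS : ∀ l : ℝ, 0 < l → l ≤ 2 → sPhi φ l ≤ S) (a : E) (i : ℤ) (t : ℝ)
    (ht : t ∈ Set.Ico ((2:ℝ) ^ i) ((2:ℝ) ^ (i + 1))) :
    kSeq φ j₀ j₁ a i ≤ S * (ENNReal.ofReal (φ t⁻¹) * Kfun j₀ j₁ t a) := by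
  have h2 : (0:ℝ) < 2 ^ i := by positivity
  have ht0 : 0 < t := h2.trans_le ht.1
  have h := ofReal_phi_le φ hφpos (t / 2 ^ i) t⁻¹ (by positivity)
  have e : t / (2:ℝ) ^ i * t⁻¹ = 2 ^ (-i) := by rw [zpow_neg]; field_simp
  rw [e] at h
  have h3 := hS (t / 2 ^ i) (by positivity) (by
    rw [div_le_iff₀ h2, ← two_zpow_succ]; exact ht.2.le)
  have h4 := Kfun_mono j₀ j₁ t (2 ^ i) ht.1 a
  unfold kSeq
  rw [← mul_assoc]
  gcongr
  exact h.trans (by gcongr)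

lemma interpNormK_le {p : ℝ≥0∞} (hp : 1 ≤ p)
    (hφpos : ∀ t ∈ Set.Ioi (0:ℝ), 0 < φ t) (S : ℝ≥0∞)
    (hS : ∀ l : ℝ, 0 < l → l ≤ 2 → sPhi φ l ≤ S) (a : E) :
    interpNormK φ p j₀ j₁ a ≤ 2 * S * lpS p (kSeq φ j₀ j₁ a) := by
  rw [← lpS_const_mul hp]
  unfold interpNormK lpS
  split_ifs with hpt
  · refine iSup₂_le fun t ht => ?_
    rw [Ioi_eq_iUnion, Set.mem_iUnion] at ht
    obtain ⟨i, hi⟩ := ht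
    exact (pt_upper φ j₀ j₁ hφpos S hS a i t hi).trans
      (le_iSup (fun j => 2 * S * kSeq φ j₀ j₁ a j) i)
  · rw [Ioi_eq_iUnion, lintegral_iUnion (fun i => measurableSet_Ico) Ico_disj]
    gcongr with i
    have h2 : (0:ℝ) < 2 ^ i := by positivity
    calc _ ≤ ∫⁻ t in Set.Ico ((2:ℝ) ^ i) ((2:ℝ) ^ (i + 1)),
          (2 * S * kSeq φ j₀ j₁ a i) ^ p.toReal / ENNReal.ofReal (2 ^ i) := by
          refine setLIntegral_mono measurable_const fun t ht => ?_
          have h3 := pt_upper φ j₀ j₁ hφpos S hS a i t ht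
          have h4 := ENNReal.ofReal_le_ofReal ht.1
          exact ENNReal.div_le_div (ENNReal.rpow_le_rpow h3 ENNReal.toReal_nonneg) h4
      _ = _ := by
          rw [setLIntegral_const, vol_Ico]
          exact ENNReal.div_mul_cancel (by simpa using h2) (by simp)

lemma le_interpNormK {p : ℝ≥0∞} (hp : 1 ≤ p)
    (hφpos : ∀ t ∈ Set.Ioi (0:ℝ), 0 < φ t) (S : ℝ≥0∞) (hSt : S ≠ ∞)
    (hS : ∀ l : ℝ, 0 < l → l ≤ 2 → sPhi φ l ≤ S) (a : E) :
    lpS p (kSeq φ j₀ j₁ a) ≤ 2 * S * interpNormK φ p j₀ j₁ a := by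
  unfold interpNormK lpS
  split_ifs with hpt
  · refine iSup_le fun i => ?_
    have h2 : (0:ℝ) < 2 ^ i := by positivity
    have := pt_lower φ j₀ j₁ hφpos S hS a i (2 ^ i) ⟨le_rfl, by rw [two_zpow_succ]; linarith⟩
    refine this.trans ?_
    gcongr
    · exact le_mul_of_one_le_left' (by norm_num)
    · exact le_iSup₂ (f := fun (t : ℝ) (_ : t ∈ Set.Ioi (0:ℝ)) =>
        ENNReal.ofReal (φ t⁻¹) * Kfun j₀ j₁ t a) (2 ^ i) h2
  · have h1 := one_le_toReal_of hp hpt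
    have h0 : 0 < p.toReal := by linarith
    set r := p.toReal
    have key : ∑' i, kSeq φ j₀ j₁ a i ^ r ≤ (2 * S) ^ r * ∫⁻ t in Set.Ioi (0:ℝ),
        (ENNReal.ofReal (φ t⁻¹) * Kfun j₀ j₁ t a) ^ r / ENNReal.ofReal t := by
      rw [Ioi_eq_iUnion, lintegral_iUnion (fun i => measurableSet_Ico) Ico_disj,
        ← ENNReal.tsum_mul_left]
      gcongr with i
      have h2 : (0:ℝ) < 2 ^ i := by positivity
      have h2r : (2:ℝ≥0∞) ≤ 2 ^ r := by
        calc (2:ℝ≥0∞) = 2 ^ (1:ℝ) := by simp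
          _ ≤ _ := ENNReal.rpow_le_rpow_of_exponent_le (by norm_num) h1
      calc kSeq φ j₀ j₁ a i ^ r = 2 * ∫⁻ t in Set.Ico ((2:ℝ) ^ i) ((2:ℝ) ^ (i + 1)),
            kSeq φ j₀ j₁ a i ^ r / ENNReal.ofReal (2 ^ (i + 1)) := by
            rw [setLIntegral_const, vol_Ico, two_zpow_succ, ENNReal.ofReal_mul (by norm_num),
              ← mul_assoc, mul_comm (2:ℝ≥0∞), div_eq_mul_inv,
              ENNReal.mul_inv (by simp) (by simp)]
            rw [show ENNReal.ofReal 2 = 2 by simp]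
            calc kSeq φ j₀ j₁ a i ^ r = kSeq φ j₀ j₁ a i ^ r * ((2:ℝ≥0∞)⁻¹ * 2) *
                  ((ENNReal.ofReal (2 ^ i))⁻¹ * ENNReal.ofReal (2 ^ i)) := by
                  rw [ENNReal.inv_mul_cancel (by norm_num) (by norm_num),
                    ENNReal.inv_mul_cancel (by simpa using h2) (by simp)]
                  simp
              _ = _ := by ring
        _ ≤ 2 * ∫⁻ t in Set.Ico ((2:ℝ) ^ i) ((2:ℝ) ^ (i + 1)),
            S ^ r * ((ENNReal.ofReal (φ t⁻¹) * Kfun j₀ j₁ t a) ^ r / ENNReal.ofReal t) := by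
            gcongr 2 * ?_
            refine setLIntegral_mono' measurableSet_Ico fun t ht => ?_
            rw [← mul_div_assoc, ← ENNReal.mul_rpow_of_nonneg _ _ h0.le]
            gcongr
            · exact pt_lower φ j₀ j₁ hφpos S hS a i t ht
            · exact ht.2.le
        _ ≤ _ := by
            rw [lintegral_const_mul' _ _ (ENNReal.rpow_ne_top_of_nonneg h0.le hSt),
              ENNReal.mul_rpow_of_nonneg _ _ h0.le, ← mul_assoc]
            gcongr
    calc _ ≤ ((2 * S) ^ r * ∫⁻ t in Set.Ioi (0:ℝ),
        (ENNReal.ofReal (φ t⁻¹) * Kfun j₀ j₁ t a) ^ r / ENNReal.ofReal t) ^ r⁻¹ := by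
          gcongr
      _ = _ := by
          rw [ENNReal.mul_rpow_of_nonneg _ _ (inv_nonneg.2 h0.le), ENNReal.rpow_rpow_inv h0.ne']

lemma Kfun_J_le (t : ℝ) (ht : 0 < t) (s : ℝ) (hs : 0 < s) (u : A₀ × A₁) (hu : j₀ u.1 = j₁ u.2) :
    Kfun j₀ j₁ t (j₀ u.1) ≤ min 1 (ENNReal.ofReal (t / s)) * ENNReal.ofReal (Jfun s u) := by
  have hJ0 : ‖u.1‖ ≤ Jfun s u := le_max_left _ _
  have hJ1 : s * ‖u.2‖ ≤ Jfun s u := le_max_right _ _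
  rcases le_total (1:ℝ≥0∞) (ENNReal.ofReal (t / s)) with h | h
  · rw [min_eq_left h, one_mul]
    have := Kfun_le j₀ j₁ t u.1 0
    simp only [map_zero, add_zero, norm_zero, mul_zero] at this
    exact this.trans (ENNReal.ofReal_le_ofReal hJ0)
  · rw [min_eq_right h, hu, ← ENNReal.ofReal_mul (by positivity)]
    have := Kfun_le j₀ j₁ t 0 u.2
    simp only [map_zero, zero_add, norm_zero] at this
    refine this.trans (ENNReal.ofReal_le_ofReal ?_)
    calc t * ‖u.2‖ = t / s * (s * ‖u.2‖) := by field_simp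
      _ ≤ _ := by gcongr

lemma Kfun_le_tsum (t : ℝ) (ht : 0 < t) (a : E) (u : ℤ → A₀ × A₁)
    (hlim : Filter.Tendsto
      (fun N : ℕ => Kfun j₀ j₁ 1 (a - ∑ j ∈ Finset.Icc (-(N:ℤ)) (N:ℤ), j₀ (u j).1))
      Filter.atTop (nhds 0)) :
    Kfun j₀ j₁ t a ≤ ∑' j, Kfun j₀ j₁ t (j₀ (u j).1) := by
  have h1 : Filter.Tendsto (fun N : ℕ => ENNReal.ofReal (max 1 t) *
      Kfun j₀ j₁ 1 (a - ∑ j ∈ Finset.Icc (-(N:ℤ)) (N:ℤ), j₀ (u j).1) +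
        ∑' j, Kfun j₀ j₁ t (j₀ (u j).1)) Filter.atTop
      (nhds (ENNReal.ofReal (max 1 t) * 0 + ∑' j, Kfun j₀ j₁ t (j₀ (u j).1))) :=
    (ENNReal.Tendsto.const_mul hlim (Or.inr (by simp))).add tendsto_const_nhds
  rw [mul_zero, zero_add] at h1
  refine ge_of_tendsto' h1 fun N => ?_
  set s := ∑ j ∈ Finset.Icc (-(N:ℤ)) (N:ℤ), j₀ (u j).1
  calc Kfun j₀ j₁ t a = Kfun j₀ j₁ t ((a - s) + s) := by rw [sub_add_cancel]
    _ ≤ Kfun j₀ j₁ t (a - s) + Kfun j₀ j₁ t s := Kfun_add_le j₀ j₁ t ht.le _ _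
    _ ≤ _ := by
      gcongr
      · exact Kfun_scale j₀ j₁ 1 t _ (le_max_left _ _) (by simp) _
      · exact (Kfun_sum_le j₀ j₁ t ht.le _ _).trans (ENNReal.sum_le_tsum _)

lemma kSeq_le (hφpos : ∀ t ∈ Set.Ioi (0:ℝ), 0 < φ t) (a : E) (u : ℤ → A₀ × A₁)
    (hu : ∀ j, j₀ (u j).1 = j₁ (u j).2)
    (hlim : Filter.Tendsto
      (fun N : ℕ => Kfun j₀ j₁ 1 (a - ∑ j ∈ Finset.Icc (-(N:ℤ)) (N:ℤ), j₀ (u j).1))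
      Filter.atTop (nhds 0)) (i : ℤ) :
    kSeq φ j₀ j₁ a i ≤ ∑' k, cKer φ k *
      ENNReal.ofReal (φ ((2:ℝ) ^ (-(i + k))) * Jfun ((2:ℝ) ^ (i + k)) (u (i + k))) := by
  unfold kSeq
  have h := Kfun_le_tsum j₀ j₁ (2 ^ i) (by positivity) a u hlim
  rw [← (Equiv.addLeft i).tsum_eq (fun j => Kfun j₀ j₁ (2 ^ i) (j₀ (u j).1))] at h
  simp only [Equiv.coe_addLeft] at h
  calc _ ≤ ENNReal.ofReal (φ (2 ^ (-i))) * ∑' k, Kfun j₀ j₁ (2 ^ i) (j₀ (u (i + k)).1) := by gcongr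
    _ ≤ _ := by
      rw [← ENNReal.tsum_mul_left]
      refine ENNReal.tsum_le_tsum fun k => ?_
      have hk := Kfun_J_le j₀ j₁ (2 ^ i) (by positivity) (2 ^ (i + k)) (by positivity) (u (i + k))
        (hu _)
      have e : (2:ℝ) ^ i / 2 ^ (i + k) = 2 ^ (-k) := by
        rw [← zpow_sub₀ (by norm_num)]; congr 1; ring
      rw [e] at hk
      have hf := ofReal_phi_le φ hφpos (2 ^ k) (2 ^ (-(i + k))) (by positivity)
      have e2 : (2:ℝ) ^ k * 2 ^ (-(i + k)) = 2 ^ (-i) := by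
        rw [← zpow_add₀ (by norm_num)]; congr 1; ring
      rw [e2] at hf
      rw [ENNReal.ofReal_mul (hφpos _ (by simp; positivity)).le]
      unfold cKer
      calc _ ≤ (sPhi φ (2 ^ k) * ENNReal.ofReal (φ (2 ^ (-(i + k))))) *
            (min 1 (ENNReal.ofReal (2 ^ (-k))) * ENNReal.ofReal (Jfun (2 ^ (i + k)) (u (i + k)))) := by
            gcongr
        _ = _ := by ring

lemma lpS_kSeq_le {p : ℝ≥0∞} (hp : 1 ≤ p)
    (hφpos : ∀ t ∈ Set.Ioi (0:ℝ), 0 < φ t) (hφ : memIo φ 0 1) (a : E) :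
    lpS p (kSeq φ j₀ j₁ a) ≤ (1 + ∑' k, cKer φ k) * interpNormJ φ p j₀ j₁ a := by
  have hc := cKer_tsum φ hφpos hφ
  have hc' : 1 + ∑' k, cKer φ k ≠ ∞ := ENNReal.add_ne_top.2 ⟨by simp, hc⟩
  have hc0 : 1 + ∑' k, cKer φ k ≠ 0 := by simp
  unfold interpNormJ
  rw [ENNReal.mul_iInf_of_ne hc0 hc']
  refine le_iInf fun u => ?_
  rw [ENNReal.mul_iInf_of_ne hc0 hc']
  refine le_iInf fun hu => ?_
  rw [ENNReal.mul_iInf_of_ne hc0 hc']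
  refine le_iInf fun hlim => ?_
  refine (lpS_mono p (kSeq_le φ j₀ j₁ hφpos a u hu hlim)).trans ?_
  refine (lpS_young hp (cKer φ) (fun j =>
    ENNReal.ofReal (φ ((2:ℝ) ^ (-j)) * Jfun ((2:ℝ) ^ j) (u j)))).trans ?_
  change _ ≤ _ * lpS p (fun j =>
    ENNReal.ofReal (φ ((2:ℝ) ^ (-j)) * Jfun ((2:ℝ) ^ j) (u j)))
  gcongr
  exact le_add_self

lemma exists_near (hφpos : ∀ t ∈ Set.Ioi (0:ℝ), 0 < φ t) (a : E) (i : ℤ) (e : ℝ≥0∞) (he : e ≠ 0)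
    (hk : kSeq φ j₀ j₁ a i ≠ ∞) :
    ∃ q : A₀ × A₁, j₀ q.1 + j₁ q.2 = a ∧
      ENNReal.ofReal (φ ((2:ℝ) ^ (-i))) * ENNReal.ofReal (‖q.1‖ + 2 ^ i * ‖q.2‖) ≤
        kSeq φ j₀ j₁ a i + e := by
  have hf := hφpos (2 ^ (-i)) (by simp; positivity)
  have hf0 : ENNReal.ofReal (φ ((2:ℝ) ^ (-i))) ≠ 0 := by simpa using hf
  have hft : ENNReal.ofReal (φ ((2:ℝ) ^ (-i))) ≠ ∞ := by simp
  have hK : Kfun j₀ j₁ (2 ^ i) a ≠ ∞ := by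
    intro h
    apply hk
    rw [kSeq, h, ENNReal.mul_top hf0]
  have hlt : Kfun j₀ j₁ (2 ^ i) a < Kfun j₀ j₁ (2 ^ i) a + e / ENNReal.ofReal (φ ((2:ℝ) ^ (-i))) :=
    ENNReal.lt_add_right hK (by simp [he])
  conv_lhs at hlt => unfold Kfun
  simp only [iInf_lt_iff] at hlt
  obtain ⟨q, hq, hlt⟩ := hlt
  refine ⟨q, hq, ?_⟩
  calc _ ≤ ENNReal.ofReal (φ ((2:ℝ) ^ (-i))) *
      (Kfun j₀ j₁ (2 ^ i) a + e / ENNReal.ofReal (φ ((2:ℝ) ^ (-i)))) := by gcongr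
    _ = _ := by
      rw [mul_add, ENNReal.mul_div_cancel hf0 hft, kSeq]

lemma telescope (b : ℤ → E) (N : ℕ) :
    ∑ j ∈ Finset.Icc (-(N:ℤ)) (N:ℤ), (b (j + 1) - b j) = b (N + 1) - b (-N) := by
  induction N with
  | zero => simp
  | succ n ih =>
    have : Finset.Icc (-((n + 1 : ℕ):ℤ)) ((n + 1 : ℕ):ℤ) =
        insert (-((n:ℤ) + 1)) (insert ((n:ℤ) + 1) (Finset.Icc (-(n:ℤ)) (n:ℤ))) := by
      ext x; simp; omega
    rw [this, Finset.sum_insert (by simp; omega), Finset.sum_insert (by simp), ih]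
    push_cast
    rw [show -((n:ℤ) + 1) + 1 = -n by ring]
    abel

lemma interpNormJ_le_of (hφpos : ∀ t ∈ Set.Ioi (0:ℝ), 0 < φ t) (hφ : memIo φ 0 1)
    {p : ℝ≥0∞} (hp : 1 ≤ p) (S : ℝ≥0∞)
    (hS : ∀ l : ℝ, 0 < l → l ≤ 2 → sPhi φ l ≤ S) (a : E) (y : ℤ → ℝ≥0∞) (hy : lpS p y ≠ ∞)
    (q : ℤ → A₀ × A₁) (hq : ∀ i, j₀ (q i).1 + j₁ (q i).2 = a)
    (hqy : ∀ i, ENNReal.ofReal (φ ((2:ℝ) ^ (-i))) *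
      ENNReal.ofReal (‖(q i).1‖ + 2 ^ i * ‖(q i).2‖) ≤ y i) :
    interpNormJ φ p j₀ j₁ a ≤ (S + 1) * lpS p y := by
  have hc := cKer_tsum φ hφpos hφ
  set Y := lpS p y
  have hyY : ∀ i, y i ≤ Y := le_lpS hp y
  have hφ1 : ENNReal.ofReal (φ 1) ≠ 0 := by simpa using hφpos 1 (by simp)
  -- decay estimates
  have hb : ∀ N : ℕ, ENNReal.ofReal (φ 1) * ENNReal.ofReal ‖(q (-N)).1‖ ≤ cKer φ (-N) * Y := by
    intro N
    have h := ofReal_phi_le φ hφpos (2 ^ (-(N:ℤ))) (2 ^ (N:ℤ)) (by positivity)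
    rw [← zpow_add₀ (by norm_num), neg_add_cancel, zpow_zero] at h
    have h2 := (hqy (-N)).trans (hyY _)
    rw [neg_neg] at h2
    have h3 : (1:ℝ≥0∞) ≤ ENNReal.ofReal (2 ^ (N:ℤ)) := by
      rw [ENNReal.one_le_ofReal]
      exact one_le_zpow₀ (by norm_num) (by positivity)
    rw [cKer, neg_neg, min_eq_left h3, mul_one]
    calc _ ≤ (sPhi φ (2 ^ (-(N:ℤ))) * ENNReal.ofReal (φ (2 ^ (N:ℤ)))) *
          ENNReal.ofReal (‖(q (-N)).1‖ + 2 ^ (-(N:ℤ)) * ‖(q (-N)).2‖) := by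
          gcongr
          have : 0 ≤ (2:ℝ) ^ (-(N:ℤ)) * ‖(q (-N)).2‖ := by positivity
          linarith
      _ ≤ _ := by
          rw [mul_assoc]
          gcongr
  have hcc : ∀ N : ℕ, ENNReal.ofReal (φ 1) * ENNReal.ofReal ‖(q (N + 1)).2‖ ≤
      cKer φ (N + 1) * Y := by
    intro N
    have h := ofReal_phi_le φ hφpos (2 ^ ((N:ℤ) + 1)) (2 ^ (-((N:ℤ) + 1))) (by positivity)
    rw [← zpow_add₀ (by norm_num), add_neg_cancel, zpow_zero] at h
    have h2 := (hqy (N + 1)).trans (hyY _)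
    have h3 : ENNReal.ofReal ((2:ℝ) ^ (-((N:ℤ) + 1))) ≤ 1 := by
      rw [ENNReal.ofReal_le_one, zpow_neg]
      exact inv_le_one_of_one_le₀ (one_le_zpow₀ (by norm_num) (by positivity))
    rw [cKer, min_eq_right h3]
    have e : ENNReal.ofReal ‖(q (N + 1)).2‖ = ENNReal.ofReal ((2:ℝ) ^ (-((N:ℤ) + 1))) *
        ENNReal.ofReal (2 ^ ((N:ℤ) + 1) * ‖(q (N + 1)).2‖) := by
      rw [← ENNReal.ofReal_mul (by positivity), ← mul_assoc, ← zpow_add₀ (by norm_num),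
        neg_add_cancel, zpow_zero, one_mul]
    rw [e]
    calc _ ≤ (sPhi φ (2 ^ ((N:ℤ) + 1)) * ENNReal.ofReal (φ (2 ^ (-((N:ℤ) + 1))))) *
          (ENNReal.ofReal ((2:ℝ) ^ (-((N:ℤ) + 1))) *
          ENNReal.ofReal (‖(q (N + 1)).1‖ + 2 ^ ((N:ℤ) + 1) * ‖(q (N + 1)).2‖)) := by
          gcongr
          have : 0 ≤ ‖(q (N + 1)).1‖ := by positivity
          linarith
      _ = sPhi φ (2 ^ ((N:ℤ) + 1)) * ENNReal.ofReal ((2:ℝ) ^ (-((N:ℤ) + 1))) *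
          (ENNReal.ofReal (φ (2 ^ (-((N:ℤ) + 1)))) *
          ENNReal.ofReal (‖(q (N + 1)).1‖ + 2 ^ ((N:ℤ) + 1) * ‖(q (N + 1)).2‖)) := by ring
      _ ≤ _ := by gcongr
  have hcof := ENNReal.tendsto_cofinite_zero_of_tsum_ne_top hc
  have inj1 : Function.Injective (fun N : ℕ => -(N:ℤ)) := fun a b h => by simpa using h
  have inj2 : Function.Injective (fun N : ℕ => (N:ℤ) + 1) := fun a b h => by simpa using h
  have t1 : Filter.Tendsto (fun N : ℕ => cKer φ (-(N:ℤ))) Filter.atTop (nhds 0) := by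
    rw [← Nat.cofinite_eq_atTop]; exact hcof.comp inj1.tendsto_cofinite
  have t2 : Filter.Tendsto (fun N : ℕ => cKer φ ((N:ℤ) + 1)) Filter.atTop (nhds 0) := by
    rw [← Nat.cofinite_eq_atTop]; exact hcof.comp inj2.tendsto_cofinite
  have t3 : Filter.Tendsto (fun N : ℕ => (ENNReal.ofReal (φ 1))⁻¹ *
      ((cKer φ (-(N:ℤ)) + cKer φ ((N:ℤ) + 1)) * Y)) Filter.atTop (nhds 0) := by
    have := ENNReal.Tendsto.const_mul (a := (ENNReal.ofReal (φ 1))⁻¹)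
      (ENNReal.Tendsto.mul_const (b := Y) (t1.add t2) (Or.inr hy))
      (Or.inr (ENNReal.inv_ne_top.2 hφ1))
    simpa using this
  let u : ℤ → A₀ × A₁ := fun i => ((q (i + 1)).1 - (q i).1, (q i).2 - (q (i + 1)).2)
  have hu : ∀ i, j₀ (u i).1 = j₁ (u i).2 := by
    intro i
    simp only [u, map_sub]
    have h1 := hq i
    have h2 := hq (i + 1)
    rw [sub_eq_sub_iff_add_eq_add, h2, ← h1, add_comm]
  have hlim : Filter.Tendsto
      (fun N : ℕ => Kfun j₀ j₁ 1 (a - ∑ j ∈ Finset.Icc (-(N:ℤ)) (N:ℤ), j₀ (u j).1))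
      Filter.atTop (nhds 0) := by
    refine tendsto_of_tendsto_of_tendsto_of_le_of_le tendsto_const_nhds t3 (fun _ => bot_le)
      fun N => ?_
    have e : a - ∑ j ∈ Finset.Icc (-(N:ℤ)) (N:ℤ), j₀ (u j).1 =
        j₀ (q (-N)).1 + j₁ (q (N + 1)).2 := by
      simp only [u, map_sub]
      rw [telescope (fun i => j₀ (q i).1) N]
      have h2 := hq (N + 1)
      nth_rw 1 [← h2]
      abel
    simp only [e]
    refine (Kfun_le j₀ j₁ 1 _ _).trans ?_
    rw [one_mul, ENNReal.ofReal_add (norm_nonneg _) (norm_nonneg _), mul_comm, ← div_eq_mul_inv,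
      ENNReal.le_div_iff_mul_le (Or.inl hφ1) (Or.inl (by simp)), mul_comm, mul_add, add_mul]
    exact add_le_add (hb N) (hcc N)
  have hle : interpNormJ φ p j₀ j₁ a ≤ lpS p (fun j =>
      ENNReal.ofReal (φ ((2:ℝ) ^ (-j)) * Jfun ((2:ℝ) ^ j) (u j))) :=
    iInf_le_of_le u (iInf_le_of_le hu (iInf_le_of_le hlim le_rfl))
  refine hle.trans ?_
  have hpt : ∀ j, ENNReal.ofReal (φ ((2:ℝ) ^ (-j)) * Jfun ((2:ℝ) ^ j) (u j)) ≤
      S * y (j + 1) + y j := by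
    intro j
    have hJ : Jfun ((2:ℝ) ^ j) (u j) ≤ (‖(q (j + 1)).1‖ + 2 ^ (j + 1) * ‖(q (j + 1)).2‖) +
        (‖(q j).1‖ + 2 ^ j * ‖(q j).2‖) := by
      have hp2 : (0:ℝ) < 2 ^ j := by positivity
      have n1 := norm_sub_le (q (j + 1)).1 (q j).1
      have n2 := mul_le_mul_of_nonneg_left (norm_sub_le (q j).2 (q (j + 1)).2) hp2.le
      have m1 : 0 ≤ 2 ^ j * ‖(q j).2‖ := by positivity
      have m2 : 0 ≤ 2 ^ j * ‖(q (j + 1)).2‖ := by positivity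
      have m3 := norm_nonneg (q j).1
      have m4 := norm_nonneg (q (j + 1)).1
      rw [two_zpow_succ]
      refine max_le ?_ ?_ <;> simp only [u] <;> linarith
    have hf := ofReal_phi_le φ hφpos 2 (2 ^ (-(j + 1))) (by positivity)
    rw [show (2:ℝ) * 2 ^ (-(j + 1)) = 2 ^ (-j) by
      rw [← two_zpow_succ]; congr 1; ring] at hf
    rw [ENNReal.ofReal_mul (hφpos _ (by simp; positivity)).le]
    calc _ ≤ ENNReal.ofReal (φ ((2:ℝ) ^ (-j))) *
        (ENNReal.ofReal (‖(q (j + 1)).1‖ + 2 ^ (j + 1) * ‖(q (j + 1)).2‖) +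
        ENNReal.ofReal (‖(q j).1‖ + 2 ^ j * ‖(q j).2‖)) := by
          rw [← ENNReal.ofReal_add (by positivity) (by positivity)]
          gcongr
      _ ≤ _ := by
          rw [mul_add]
          refine add_le_add ?_ ?_
          · calc _ ≤ (S * ENNReal.ofReal (φ (2 ^ (-(j + 1))))) *
                ENNReal.ofReal (‖(q (j + 1)).1‖ + 2 ^ (j + 1) * ‖(q (j + 1)).2‖) := by
                  gcongr
                  exact hf.trans (by gcongr; exact hS 2 (by norm_num) le_rfl)
              _ ≤ _ := by
                  rw [mul_assoc]
                  gcongr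
                  exact hqy (j + 1)
          · exact hqy j
  refine (lpS_mono p hpt).trans ((lpS_add_le hp _ _).trans ?_)
  rw [lpS_const_mul hp, lpS_shift p 1 y, add_mul, one_mul]

lemma interpNormJ_le (hφpos : ∀ t ∈ Set.Ioi (0:ℝ), 0 < φ t) (hφ : memIo φ 0 1)
    {p : ℝ≥0∞} (hp : 1 ≤ p) (S : ℝ≥0∞) (hSt : S ≠ ∞)
    (hS : ∀ l : ℝ, 0 < l → l ≤ 2 → sPhi φ l ≤ S) (a : E) :
    interpNormJ φ p j₀ j₁ a ≤ (S + 1) * lpS p (kSeq φ j₀ j₁ a) := by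
  have hS0 : S + 1 ≠ 0 := by simp
  have hSt' : S + 1 ≠ ∞ := by simp [hSt]
  by_cases hk : lpS p (kSeq φ j₀ j₁ a) = ∞
  · rw [hk, ENNReal.mul_top hS0]; exact le_top
  refine ENNReal.le_of_forall_pos_le_add fun ε hε _ => ?_
  have hη : (ε : ℝ≥0∞) / (S + 1) ≠ 0 := by
    simp [hε.ne', hSt]
  obtain ⟨e, he, hes⟩ := exists_lpS_small hp _ hη
  have hki : ∀ i, kSeq φ j₀ j₁ a i ≠ ∞ := fun i => ne_top_of_le_ne_top hk (le_lpS hp _ i)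
  choose q hq hqy using fun i => exists_near φ j₀ j₁ hφpos a i (e i) (he i) (hki i)
  have hsum : lpS p (fun i => kSeq φ j₀ j₁ a i + e i) ≤
      lpS p (kSeq φ j₀ j₁ a) + (ε : ℝ≥0∞) / (S + 1) :=
    (lpS_add_le hp _ _).trans (by gcongr)
  have hfin : lpS p (fun i => kSeq φ j₀ j₁ a i + e i) ≠ ∞ :=
    ne_top_of_le_ne_top (ENNReal.add_ne_top.2 ⟨hk, ENNReal.div_ne_top (by simp) hS0⟩) hsum
  refine (interpNormJ_le_of φ j₀ j₁ hφpos hφ hp S hS a _ hfin q hq hqy).trans ?_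
  calc _ ≤ (S + 1) * (lpS p (kSeq φ j₀ j₁ a) + (ε : ℝ≥0∞) / (S + 1)) := by gcongr
    _ = _ := by rw [mul_add, ENNReal.mul_div_cancel hS0 hSt']

end Kprops


/-- Equivalence theorem: for an interpolation couple `(A₀,A₁)`,
`φ ∈ I_o(0,1)` and `p ∈ [1,∞]`, the `K`- and `J`-method spaces `(A₀,A₁)^K_{φ,p}` and
`(A₀,A₁)^J_{φ,p}` coincide, with equivalent norms. -/
theorem interpNormK_equiv_interpNormJ {E A₀ A₁ : Type*} [AddCommGroup E]
    [NormedAddCommGroup A₀] [NormedAddCommGroup A₁]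
    (j₀ : A₀ →+ E) (j₁ : A₁ →+ E)
    (φ : ℝ → ℝ) (hφpos : ∀ t ∈ Set.Ioi (0:ℝ), 0 < φ t) (hφ : memIo φ 0 1)
    (p : ℝ≥0∞) (hp : 1 ≤ p) :
    ∃ C > (0:ℝ), ∀ a : E,
      interpNormK φ p j₀ j₁ a ≤ ENNReal.ofReal C * interpNormJ φ p j₀ j₁ a ∧
      interpNormJ φ p j₀ j₁ a ≤ ENNReal.ofReal C * interpNormK φ p j₀ j₁ a := by
  obtain ⟨S, hSt, hS1, hS⟩ := exists_local_bound φ hφpos hφ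
  have hc := cKer_tsum φ hφpos hφ
  set D1 : ℝ≥0∞ := 2 * S * (1 + ∑' k, cKer φ k) with hD1
  set D2 : ℝ≥0∞ := (S + 1) * (2 * S) with hD2
  have hD1t : D1 ≠ ∞ := ENNReal.mul_ne_top (ENNReal.mul_ne_top (by simp) hSt)
    (ENNReal.add_ne_top.2 ⟨by simp, hc⟩)
  have hD2t : D2 ≠ ∞ := ENNReal.mul_ne_top (by simp [hSt]) (ENNReal.mul_ne_top (by simp) hSt)
  have hDt : D1 + D2 ≠ ∞ := ENNReal.add_ne_top.2 ⟨hD1t, hD2t⟩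
  refine ⟨(D1 + D2).toReal + 1, by positivity, fun a => ?_⟩
  have hC : D1 + D2 ≤ ENNReal.ofReal ((D1 + D2).toReal + 1) := by
    rw [ENNReal.le_ofReal_iff_toReal_le hDt (by positivity)]
    linarith
  constructor
  · calc _ ≤ 2 * S * lpS p (kSeq φ j₀ j₁ a) := interpNormK_le φ j₀ j₁ hp hφpos S hS a
      _ ≤ 2 * S * ((1 + ∑' k, cKer φ k) * interpNormJ φ p j₀ j₁ a) := by
        gcongr
        exact lpS_kSeq_le φ j₀ j₁ hp hφpos hφ a
      _ = D1 * interpNormJ φ p j₀ j₁ a := by rw [hD1]; ring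
      _ ≤ _ := by
        gcongr
        exact le_self_add.trans hC
  · calc _ ≤ (S + 1) * lpS p (kSeq φ j₀ j₁ a) := interpNormJ_le φ j₀ j₁ hφpos hφ hp S hSt hS a
      _ ≤ (S + 1) * (2 * S * interpNormK φ p j₀ j₁ a) := by
        gcongr
        exact le_interpNormK φ j₀ j₁ hp hφpos S hSt hS a
      _ = D2 * interpNormK φ p j₀ j₁ a := by rw [hD2]; ring
      _ ≤ _ := by
        gcongr
        exact le_add_self.trans hC
end
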